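/- arXiv:0905.1045 — 2 statements merged into one kernel-verified Lean document; each statement's English description precedes it below -/
import Mathlib

section
/- Let m ≥ 2 and let a_1, …, a_m be pairwise distinct symbols, and consider the language L = { a_1^{n_1} a_2^{n_1 + n_2} ⋯ a_{m-1}^{n_{m-2} + n_{m-1}} a_m^{n_{m-1}} : n_1 ≥ 1, …, n_{m-1} ≥ 1 }. Then every context-free grammar G with L(G) = L has rank at least m − 1; that is, there exists a sentential form α derivable from the start symbol of G (S ⇒* α) that contains at least m − 1 occurrences of nonterminals. -/
/-- The language `L = { a_1^{n_1} a_2^{n_1 + n_2} ⋯ a_{m-1}^{n_{m-2}+n_{m-1}} a_m^{n_{m-1}}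
: n_1 ≥ 1, …, n_{m-1} ≥ 1 }`, encoded via a function `f : ℕ → ℕ` with `f 0 = 0`,
`f j = n_j ≥ 1` for `1 ≤ j ≤ m-1`, and `f m = 0`; the block of the letter `a_{i+1}`
(for `0 ≤ i ≤ m-1`) has length `f i + f (i+1)`. -/
def boundedSumLang {T : Type} (m : ℕ) (a : Fin m → T) : Language T :=
  { z | ∃ f : ℕ → ℕ, f 0 = 0 ∧ (∀ j : ℕ, 1 ≤ j → j ≤ m - 1 → 1 ≤ f j) ∧ f m = 0 ∧
      z = (List.ofFn fun i : Fin m =>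
            List.replicate (f i.val + f (i.val + 1)) (a i)).flatten }

/-- Whether a symbol is a nonterminal. -/
def Symbol.isNT {T N : Type} : Symbol T N → Bool
  | Symbol.nonterminal _ => true
  | Symbol.terminal _ => false

/-!
Take a parse tree of a word of the language all of whose parameters `n_i` are large. For each `i`,
some nonterminal of the tree pumps `n_i`: otherwise cutting out the repetitions along paths would
leave `n_i` unchanged and yield a word of bounded length. A pump `C ⇒* u C v` that changes `n_i`
must have `a_i` in `u` and `a_{i+1}` in `v`, since pumped words stay sorted. If `C` lay on a common
path with a nonterminal pumping `n_j`, doing both pumps would nest `a_j … a_{j+1}` inside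
`a_i … a_{i+1}`, which is sorted only if `i = j`. So nonterminals for different `i` lie on
different paths, and some sentential form contains one of each.
-/

section Derivations

variable {T : Type*} {g : ContextFreeGrammar T} {α β : List (Symbol T g.NT)} {A C : g.NT}
  {u v w x y z : List T}

/-- `DerivesWord g α w`: the sentential form `α` derives the terminal word `w`. -/
def DerivesWord (g : ContextFreeGrammar T) (α : List (Symbol T g.NT)) (w : List T) : Prop :=
  g.Derives α (w.map Symbol.terminal)

/-- `DerivesAround g α x C z`: the sentential form `α` derives `x C z`, where `C` is the only
nonterminal. For `α = [C]` this is a pump of `C`. -/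
def DerivesAround (g : ContextFreeGrammar T) (α : List (Symbol T g.NT)) (x : List T) (C : g.NT)
    (z : List T) : Prop :=
  g.Derives α (x.map Symbol.terminal ++ [Symbol.nonterminal C] ++ z.map Symbol.terminal)

/-- A useful nonterminal: it is reachable from the initial symbol, in a context that derives a
terminal word, and derives a terminal word itself. -/
def IsUseful (g : ContextFreeGrammar T) (C : g.NT) : Prop :=
  ∃ x y z, DerivesAround g [Symbol.nonterminal g.initial] x C z ∧
    DerivesWord g [Symbol.nonterminal C] y

theorem derives_append {α' β' : List (Symbol T g.NT)} (h : g.Derives α α')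
    (h' : g.Derives β β') : g.Derives (α ++ β) (α' ++ β') :=
  (h.append_right β).trans (h'.append_left α')

theorem derives_output {r : ContextFreeRule T g.NT} (hr : r ∈ g.rules) :
    g.Derives [Symbol.nonterminal r.input] r.output :=
  ContextFreeGrammar.Produces.single ⟨r, hr, ContextFreeRule.Rewrites.input_output⟩

theorem DerivesWord.append (h : DerivesWord g α u) (h' : DerivesWord g β v) :
    DerivesWord g (α ++ β) (u ++ v) := by
  simpa only [DerivesWord, List.map_append] using derives_append h h'

namespace DerivesAround

theorem refl (C : g.NT) : DerivesAround g [Symbol.nonterminal C] [] C [] :=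
  ContextFreeGrammar.Derives.refl _

theorem append_left (h : DerivesAround g β x C z) (h' : DerivesWord g α w) :
    DerivesAround g (α ++ β) (w ++ x) C z := by
  simpa [DerivesAround] using derives_append h' h

theorem append_right (h : DerivesAround g α x C z) (h' : DerivesWord g β w) :
    DerivesAround g (α ++ β) x C (z ++ w) := by
  simpa [DerivesAround] using derives_append h h'

theorem trans (h : DerivesAround g α x A z)
    (h' : DerivesAround g [Symbol.nonterminal A] u C v) :
    DerivesAround g α (x ++ u) C (v ++ z) := by
  simpa [DerivesAround] using
    ContextFreeGrammar.Derives.trans h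
      ((ContextFreeGrammar.Derives.append_left h' _).append_right _)

theorem trans_derivesWord (h : DerivesAround g α x C z)
    (h' : DerivesWord g [Symbol.nonterminal C] y) : DerivesWord g α (x ++ y ++ z) := by
  simpa [DerivesWord] using
    ContextFreeGrammar.Derives.trans h ((h'.append_left _).append_right _)

theorem iterate (h : DerivesAround g [Symbol.nonterminal C] u C v) (k : ℕ) :
    DerivesAround g [Symbol.nonterminal C]
      (List.replicate k u).flatten C (List.replicate k v).flatten := by
  induction k with
  | zero => exact refl C
  | succ k ih =>
    rw [List.replicate_succ, List.flatten_cons, List.replicate_succ', List.flatten_append,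
      List.flatten_singleton]
    exact h.trans ih

end DerivesAround

end Derivations

/-- Parse forests of a sentential form: one parse tree for each of its symbols, with terminal
leaves. They are encoded as a single inductive family, `node r hr F G` being the forest whose first
tree has the rule `r` at its root and the subtrees `F` below it, and whose other trees are `G`. -/
inductive ParseForest {T : Type*} (g : ContextFreeGrammar T) : List (Symbol T g.NT) → Type _
  | nil : ParseForest g []
  | leaf (t : T) {α : List (Symbol T g.NT)} (G : ParseForest g α) :
      ParseForest g (Symbol.terminal t :: α)
  | node (r : ContextFreeRule T g.NT) (hr : r ∈ g.rules) {α : List (Symbol T g.NT)}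
      (F : ParseForest g r.output) (G : ParseForest g α) :
      ParseForest g (Symbol.nonterminal r.input :: α)

namespace ParseForest

section Basic

variable {T : Type*} {g : ContextFreeGrammar T} {α β : List (Symbol T g.NT)} {C : g.NT}

/-- The terminal word at the leaves of a parse forest. -/
def yield {α : List (Symbol T g.NT)} : ParseForest g α → List T
  | nil => []
  | leaf t G => t :: G.yield
  | node _ _ F G => F.yield ++ G.yield

open Classical in
/-- The set of nonterminals labelling the inner nodes of a parse forest. -/
noncomputable def labels {α : List (Symbol T g.NT)} : ParseForest g α → Finset g.NT
  | nil => ∅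
  | leaf _ G => G.labels
  | node r _ F G => insert r.input (F.labels ∪ G.labels)

/-- A parse forest is reduced if no nonterminal occurs twice on a path from a root to a leaf. -/
def IsReduced {α : List (Symbol T g.NT)} : ParseForest g α → Prop
  | nil => True
  | leaf _ G => G.IsReduced
  | node r _ F G => r.input ∉ F.labels ∧ F.IsReduced ∧ G.IsReduced

/-- Juxtaposition of parse forests. -/
def append {α β : List (Symbol T g.NT)} :
    ParseForest g α → ParseForest g β → ParseForest g (α ++ β)
  | nil, H => H
  | leaf t G, H => leaf t (G.append H)
  | node r hr F G, H => node r hr F (G.append H)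

theorem yield_append (F : ParseForest g α) (H : ParseForest g β) :
    (F.append H).yield = F.yield ++ H.yield := by
  induction F with
  | nil => rfl
  | leaf t G ih => simp only [append, yield, ih, List.cons_append]
  | node r hr F G _ ih => simp only [append, yield, ih, List.append_assoc]

theorem IsReduced.append {F : ParseForest g α} {H : ParseForest g β} (hF : F.IsReduced)
    (hH : H.IsReduced) : (F.append H).IsReduced := by
  induction F with
  | nil => exact hH
  | leaf t G ih => exact ih hF
  | node r hr F G _ ih => exact ⟨hF.1, hF.2.1, ih hF.2.2⟩

theorem exists_yield_eq_append : ∀ {α : List (Symbol T g.NT)} (H : ParseForest g (α ++ β)),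
    ∃ (F : ParseForest g α) (G : ParseForest g β), H.yield = F.yield ++ G.yield
  | [], H => ⟨nil, H, rfl⟩
  | _ :: _, leaf t H =>
    let ⟨F, G, h⟩ := exists_yield_eq_append H
    ⟨leaf t F, G, by simp only [yield, h, List.cons_append]⟩
  | _ :: _, node r hr E H =>
    let ⟨F, G, h⟩ := exists_yield_eq_append H
    ⟨node r hr E F, G, by simp only [yield, h, List.append_assoc]⟩

theorem derivesWord_yield (F : ParseForest g α) : DerivesWord g α F.yield := by
  induction F with
  | nil => exact ContextFreeGrammar.Derives.refl _
  | leaf t G ih => exact ih.append_left [Symbol.terminal t]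
  | node r hr F G ihF ihG => exact DerivesWord.append ((derives_output hr).trans ihF) ihG

theorem exists_yield_eq_of_produces (h : g.Produces α β) (F : ParseForest g β) :
    ∃ F' : ParseForest g α, F'.yield = F.yield := by
  obtain ⟨r, hr, h⟩ := h
  obtain ⟨p, q, rfl, rfl⟩ := h.exists_parts
  obtain ⟨F', G, hF⟩ := F.exists_yield_eq_append
  obtain ⟨H, K, hF'⟩ := F'.exists_yield_eq_append
  refine ⟨(H.append (node r hr K nil)).append G, ?_⟩
  simp only [yield_append, yield, List.append_nil, hF, hF']

theorem exists_yield_eq_terminal : ∀ w : List T,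
    ∃ F : ParseForest g (w.map Symbol.terminal), F.yield = w
  | [] => ⟨nil, rfl⟩
  | t :: w =>
    let ⟨F, hF⟩ := exists_yield_eq_terminal w
    ⟨leaf t F, congrArg (t :: ·) hF⟩

theorem exists_yield_eq {w : List T} (h : DerivesWord g α w) :
    ∃ F : ParseForest g α, F.yield = w := by
  induction h using Relation.ReflTransGen.head_induction_on with
  | refl => exact exists_yield_eq_terminal w
  | head h _ ih =>
    obtain ⟨F, rfl⟩ := ih
    exact exists_yield_eq_of_produces h F

theorem exists_subtree (F : ParseForest g α) (hC : C ∈ F.labels) :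
    ∃ (x z : List T) (F' : ParseForest g [Symbol.nonterminal C]),
      F.yield = x ++ F'.yield ++ z ∧ DerivesAround g α x C z ∧ (F.IsReduced → F'.IsReduced) := by
  induction F with
  | nil => simp [labels] at hC
  | leaf t G ih =>
    obtain ⟨x, z, F', hyield, hder, hred⟩ := ih hC
    exact ⟨t :: x, z, F', by simp [yield, hyield],
      hder.append_left (α := [Symbol.terminal t]) (w := [t])
        (ContextFreeGrammar.Derives.refl _), hred⟩
  | node r hr F G ihF ihG =>
    simp only [labels, Finset.mem_insert, Finset.mem_union] at hC
    rcases hC with rfl | hC | hC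
    · exact ⟨[], G.yield, node r hr F nil, by simp [yield],
        (DerivesAround.refl _).append_right G.derivesWord_yield, fun h => ⟨h.1, h.2.1, trivial⟩⟩
    · obtain ⟨x, z, F', hyield, hder, hred⟩ := ihF hC
      have hder' : DerivesAround g [Symbol.nonterminal r.input] x C z :=
        (derives_output hr).trans hder
      exact ⟨x, z ++ G.yield, F', by simp [yield, hyield],
        hder'.append_right G.derivesWord_yield, fun h => hred h.2.1⟩
    · obtain ⟨x, z, F', hyield, hder, hred⟩ := ihG hC
      have hroot : DerivesWord g [Symbol.nonterminal r.input] F.yield :=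
        (derives_output hr).trans F.derivesWord_yield
      exact ⟨F.yield ++ x, z, F', by simp [yield, hyield], hder.append_left hroot,
        fun h => hred h.2.2⟩

theorem isUseful_of_mem_labels (F : ParseForest g [Symbol.nonterminal g.initial])
    (hC : C ∈ F.labels) : IsUseful g C :=
  let ⟨x, z, F', _, hder, _⟩ := F.exists_subtree hC
  ⟨x, F'.yield, z, hder, F'.derivesWord_yield⟩

end Basic

section Reduction

variable {T : Type*} {g : ContextFreeGrammar T} {α : List (Symbol T g.NT)}

theorem card_labels_le (F : ParseForest g α) : F.labels.card ≤ g.rules.card := by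
  classical
  suffices F.labels ⊆ g.rules.image (·.input) from
    (Finset.card_le_card this).trans Finset.card_image_le
  induction F with
  | nil => exact Finset.empty_subset _
  | leaf _ _ ih => exact ih
  | node r hr F G ihF ihG =>
    exact Finset.insert_subset (Finset.mem_image_of_mem _ hr) (Finset.union_subset ihF ihG)

theorem IsReduced.length_yield_le_mul_pow {M : ℕ} (hM : 1 ≤ M)
    (hout : ∀ r ∈ g.rules, r.output.length ≤ M) {F : ParseForest g α} (hF : F.IsReduced) :
    F.yield.length ≤ α.length * M ^ F.labels.card := by
  classical
  induction F with
  | nil => exact Nat.zero_le _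
  | leaf t G ih =>
    have hpow : 1 ≤ M ^ G.labels.card := Nat.one_le_pow _ _ hM
    simp only [yield, labels, List.length_cons, add_mul, one_mul]
    exact Nat.add_le_add (ih hF) hpow
  | @node r hr α F G ihF ihG =>
    obtain ⟨hroot, hF, hG⟩ := hF
    set U := (node r hr F G).labels
    have hcardF : F.labels.card + 1 ≤ U.card := by
      rw [← Finset.card_insert_of_notMem hroot]
      exact Finset.card_le_card (Finset.insert_subset_insert _ Finset.subset_union_left)
    have hcardG : G.labels.card ≤ U.card :=
      Finset.card_le_card (Finset.subset_union_right.trans (Finset.subset_insert _ _))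
    calc (F.yield ++ G.yield).length
        = F.yield.length + G.yield.length := List.length_append
      _ ≤ r.output.length * M ^ F.labels.card + α.length * M ^ G.labels.card :=
        Nat.add_le_add (ihF hF) (ihG hG)
      _ ≤ M * M ^ F.labels.card + α.length * M ^ G.labels.card := by gcongr; exact hout r hr
      _ = M ^ (F.labels.card + 1) + α.length * M ^ G.labels.card := by rw [pow_succ']
      _ ≤ M ^ U.card + α.length * M ^ U.card := by gcongr
      _ = (α.length + 1) * M ^ U.card := by ring

theorem exists_forall_length_yield_le (g : ContextFreeGrammar T) (α : List (Symbol T g.NT)) :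
    ∃ B : ℕ, ∀ F : ParseForest g α, F.IsReduced → F.yield.length ≤ B := by
  let M := g.rules.sup (·.output.length) + 1
  have hM : 1 ≤ M := Nat.le_add_left 1 _
  have hout : ∀ r ∈ g.rules, r.output.length ≤ M := fun r hr =>
    (Finset.le_sup (f := (·.output.length)) hr).trans (Nat.le_succ _)
  refine ⟨α.length * M ^ g.rules.card, fun F hF => (hF.length_yield_le_mul_pow hM hout).trans ?_⟩
  exact Nat.mul_le_mul_left _ (Nat.pow_le_pow_right hM F.card_labels_le)

theorem exists_isReduced_map_yield_eq {R : Type*} [AddCommMonoid R] {φ : List T → R}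
    (hadd : ∀ u v, φ (u ++ v) = φ u + φ v) (F : ParseForest g α)
    (hpump : ∀ C ∈ F.labels, ∀ u v, DerivesAround g [Symbol.nonterminal C] u C v →
      φ u + φ v = 0) :
    ∃ F' : ParseForest g α, F'.IsReduced ∧ φ F'.yield = φ F.yield := by
  induction F with
  | nil => exact ⟨nil, trivial, rfl⟩
  | leaf t G ih =>
    obtain ⟨G', hred, hφ⟩ := ih hpump
    refine ⟨leaf t G', hred, ?_⟩
    rw [yield, yield, ← List.singleton_append, hadd, hφ, ← hadd, List.singleton_append]
  | node r hr F G ihF ihG =>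
    simp only [labels, Finset.mem_insert, Finset.mem_union] at hpump
    obtain ⟨F', hredF, hφF⟩ := ihF fun C hC => hpump C (.inr (.inl hC))
    obtain ⟨G', hredG, hφG⟩ := ihG fun C hC => hpump C (.inr (.inr hC))
    -- If the root label recurs in `F'`, the subtree at the recurrence replaces the whole tree.
    by_cases hroot : r.input ∈ F'.labels
    · obtain ⟨x, z, H, hyield, hder, hredH⟩ := F'.exists_subtree hroot
      have hxz : φ x + φ z = 0 :=
        hpump r.input (.inl rfl) x z ((derives_output hr).trans hder)
      refine ⟨H.append G', (hredH hredF).append hredG, ?_⟩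
      calc φ (H.append G').yield
          = (φ x + φ z) + φ H.yield + φ G'.yield := by rw [yield_append, hadd, hxz, zero_add]
        _ = φ F'.yield + φ G'.yield := by
          rw [hyield, hadd, hadd, add_right_comm (φ x)]
        _ = φ (node r hr F G).yield := by rw [hφF, hφG, yield, hadd]
    · exact ⟨node r hr F' G', ⟨hroot, hredF, hredG⟩, by rw [yield, yield, hadd, hadd, hφF, hφG]⟩

end Reduction

section Antichain

variable {T : Type} {g : ContextFreeGrammar T} {α : List (Symbol T g.NT)} {ι : Type*}
  {P : ι → g.NT → Prop}

theorem exists_derives_card_le_of_root {r : ContextFreeRule T g.NT} (hr : r ∈ g.rules)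
    {F : ParseForest g r.output}
    (hP : ∀ C ∈ (node r hr F nil).labels, ∀ x z,
      DerivesAround g [Symbol.nonterminal r.input] x C z → ∀ i j, P i r.input → P j C → i = j)
    (ih : ∀ s : Finset ι, (∀ i ∈ s, ∃ C ∈ F.labels, P i C) →
      ∃ β, g.Derives r.output β ∧ s.card ≤ β.countP Symbol.isNT)
    {s : Finset ι} (hs : ∀ i ∈ s, ∃ C ∈ (node r hr F nil).labels, P i C) :
    ∃ β, g.Derives [Symbol.nonterminal r.input] β ∧ s.card ≤ β.countP Symbol.isNT := by
  by_cases hroot : ∃ i, P i r.input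
  · obtain ⟨i, hi⟩ := hroot
    have heq : ∀ j ∈ s, i = j := fun j hj =>
      let ⟨C, hC, hPC⟩ := hs j hj
      let ⟨x, z, _, _, hder, _⟩ := exists_subtree _ hC
      hP C hC x z hder i j hi hPC
    exact ⟨_, ContextFreeGrammar.Derives.refl _,
      Finset.card_le_one.2 fun j hj k hk => (heq j hj).symm.trans (heq k hk)⟩
  · have hsF : ∀ i ∈ s, ∃ C ∈ F.labels, P i C := by
      intro i hi
      obtain ⟨C, hC, hPC⟩ := hs i hi
      have hCr : C ≠ r.input := fun h => hroot ⟨i, h ▸ hPC⟩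
      exact ⟨C, by simpa [labels, hCr] using hC, hPC⟩
    obtain ⟨β, hβ, hcard⟩ := ih s hsF
    exact ⟨β, (derives_output hr).trans hβ, hcard⟩

theorem exists_derives_card_le (F : ParseForest g α)
    (hP : ∀ A ∈ F.labels, ∀ C ∈ F.labels, ∀ x z,
      DerivesAround g [Symbol.nonterminal A] x C z → ∀ i j, P i A → P j C → i = j)
    (s : Finset ι) (hs : ∀ i ∈ s, ∃ C ∈ F.labels, P i C) :
    ∃ β, g.Derives α β ∧ s.card ≤ β.countP Symbol.isNT := by
  classical
  induction F generalizing s with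
  | nil =>
    have hs : s = ∅ := Finset.eq_empty_of_forall_notMem fun i hi => by simpa [labels] using hs i hi
    exact ⟨[], ContextFreeGrammar.Derives.refl _, by simp [hs]⟩
  | leaf t G ih =>
    obtain ⟨β, hβ, hcard⟩ := ih hP s hs
    exact ⟨_, hβ.append_left [Symbol.terminal t], by simpa [Symbol.isNT] using hcard⟩
  | node r hr F G ihF ihG =>
    have hF : F.labels ⊆ (node r hr F G).labels := fun C hC => by simp [labels, hC]
    have hG : G.labels ⊆ (node r hr F G).labels := fun C hC => by simp [labels, hC]
    have hroot : (node r hr F nil).labels ⊆ (node r hr F G).labels := fun C hC => by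
      simp only [labels, Finset.union_empty] at hC ⊢
      exact Finset.insert_subset_insert _ Finset.subset_union_left hC
    let p : ι → Prop := fun i => ∃ C ∈ G.labels, P i C
    have hs' : ∀ i ∈ s.filter (¬ p ·), ∃ C ∈ (node r hr F nil).labels, P i C := by
      intro i hi
      obtain ⟨his, hip⟩ := Finset.mem_filter.1 hi
      obtain ⟨C, hC, hPC⟩ := hs i his
      have hCG : C ∉ G.labels := fun h => hip ⟨C, h, hPC⟩
      exact ⟨C, by simpa [labels, hCG] using hC, hPC⟩
    obtain ⟨β₁, hβ₁, hcard₁⟩ := exists_derives_card_le_of_root hr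
      (fun C hC => hP _ (by simp [labels]) C (hroot hC))
      (ihF fun A hA C hC => hP A (hF hA) C (hF hC)) hs'
    obtain ⟨β₂, hβ₂, hcard₂⟩ := ihG (fun A hA C hC => hP A (hG hA) C (hG hC))
      (s.filter p) (fun i hi => (Finset.mem_filter.1 hi).2)
    refine ⟨β₁ ++ β₂, derives_append hβ₁ hβ₂, ?_⟩
    rw [List.countP_append, ← Finset.card_filter_add_card_filter_not p, add_comm]
    exact Nat.add_le_add hcard₁ hcard₂

end Antichain

end ParseForest

namespace boundedSumLang

variable {T : Type} {m : ℕ} {a : Fin m → T}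

open Classical in
/-- The integer that equals the parameter `n_j` on a word of `boundedSumLang m a`, extended to all
words over `T` as an alternating sum of letter counts, with junk value for `j > m`. -/
noncomputable def param (a : Fin m → T) (w : List T) : ℕ → ℤ
  | 0 => 0
  | j + 1 => (if h : j < m then (w.count (a ⟨j, h⟩) : ℤ) else 0) - param a w j

theorem param_append (u v : List T) (j : ℕ) :
    param a (u ++ v) j = param a u j + param a v j := by
  induction j with
  | zero => rfl
  | succ j ih =>
    simp only [param, ih, List.count_append]
    split <;> push_cast <;> ring

theorem param_flatten_replicate (k : ℕ) (u : List T) (j : ℕ) :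
    param a (List.replicate k u).flatten j = k * param a u j := by
  induction k with
  | zero => simpa using param_append (a := a) [] [] j
  | succ k ih =>
    rw [List.replicate_succ, List.flatten_cons, param_append, ih]
    push_cast
    ring

open Classical in
theorem param_add_param_succ (w : List T) {j : ℕ} (hj : j < m) :
    param a w j + param a w (j + 1) = w.count (a ⟨j, hj⟩) := by
  rw [param, dif_pos hj, add_sub_cancel]

/-- The word `a_1^{f 0 + f 1} a_2^{f 1 + f 2} ⋯ a_m^{f (m - 1) + f m}`. -/
def blockWord (a : Fin m → T) (f : ℕ → ℕ) : List T :=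
  (List.ofFn fun i : Fin m => List.replicate (f i.val + f (i.val + 1)) (a i)).flatten

open Classical in
theorem count_blockWord (ha : Function.Injective a) (f : ℕ → ℕ) (i : Fin m) :
    (blockWord a f).count (a i) = f i + f (i + 1) := by
  simp [blockWord, List.count_flatten, List.map_ofFn, List.sum_ofFn, List.count_replicate,
    ha.eq_iff]

theorem param_blockWord (ha : Function.Injective a) {f : ℕ → ℕ} (hf : f 0 = 0) {j : ℕ}
    (hj : j ≤ m) : param a (blockWord a f) j = f j := by
  classical
  induction j with
  | zero => simp [param, hf]
  | succ j ih =>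
    have hsum := param_add_param_succ (a := a) (blockWord a f) hj
    rw [ih (Nat.le_of_succ_le hj), count_blockWord ha f ⟨j, hj⟩] at hsum
    push_cast at hsum
    exact add_left_cancel hsum

variable {w : List T}

theorem param_nonneg (ha : Function.Injective a) (hw : w ∈ boundedSumLang m a) {j : ℕ}
    (hj : j ≤ m) : 0 ≤ param a w j := by
  obtain ⟨f, hf, -, -, rfl⟩ := hw
  exact (param_blockWord ha hf hj).symm ▸ Int.natCast_nonneg _

theorem param_succ_le_length (ha : Function.Injective a) (hw : w ∈ boundedSumLang m a) {j : ℕ}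
    (hj : j < m) : param a w (j + 1) ≤ w.length := by
  classical
  calc param a w (j + 1)
      ≤ param a w j + param a w (j + 1) := le_add_of_nonneg_left (param_nonneg ha hw hj.le)
    _ = w.count (a ⟨j, hj⟩) := param_add_param_succ w hj
    _ ≤ w.length := mod_cast List.count_le_length

theorem exists_mem_forall_param_eq (ha : Function.Injective a) {N : ℕ} (hN : 1 ≤ N) :
    ∃ w ∈ boundedSumLang m a, ∀ i : Fin (m - 1), param a w (i + 1) = N := by
  let f : ℕ → ℕ := fun j => if 1 ≤ j ∧ j ≤ m - 1 then N else 0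
  have hf : f 0 = 0 := by simp [f]
  have hfm : f m = 0 := if_neg (by omega)
  have hfN : ∀ j, 1 ≤ j → j ≤ m - 1 → f j = N := fun j h1 h2 => if_pos ⟨h1, h2⟩
  refine ⟨blockWord a f, ⟨f, hf, fun j h1 h2 => (hfN j h1 h2).symm ▸ hN, hfm, rfl⟩, fun i => ?_⟩
  rw [param_blockWord ha hf (by omega), hfN _ (by omega) (by omega)]

theorem pairwise_le (ha : Function.Injective a) (hw : w ∈ boundedSumLang m a) :
    w.Pairwise fun s t => ∀ i j, a i = s → a j = t → i ≤ j := by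
  obtain ⟨f, -, -, -, rfl⟩ := hw
  rw [List.pairwise_flatten, List.pairwise_ofFn]
  refine ⟨fun l hl => ?_, fun i j hij s hs t ht => ?_⟩
  · obtain ⟨i, rfl⟩ := (List.mem_ofFn' _ _).1 hl
    exact List.pairwise_replicate.2 (.inr fun j k hj hk => (ha (hj.trans hk.symm)).le)
  · rintro i' j' rfl rfl
    rw [ha (List.eq_of_mem_replicate hs), ha (List.eq_of_mem_replicate ht)]
    exact hij.le

theorem le_of_append_mem (ha : Function.Injective a) {p q : List T}
    (h : p ++ q ∈ boundedSumLang m a) {i j : Fin m} (hi : a i ∈ p) (hj : a j ∈ q) : i ≤ j :=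
  (List.pairwise_append.1 (pairwise_le ha h)).2.2 _ hi _ hj i j rfl rfl

section Grammar

variable {g : ContextFreeGrammar T} {A C : g.NT} {u v : List T}

/-- `PumpsAt g a i C`: some pump `C ⇒* u C v` has the letter `a_{i+1}` in `u` and the next letter
`a_{i+2}` in `v` (letters numbered from `1`, `i` from `0`). In a grammar for `boundedSumLang m a`
the pumps that change the parameter `n_{i+1}` have this form. -/
def PumpsAt (g : ContextFreeGrammar T) (a : Fin m → T) (i : Fin (m - 1)) (C : g.NT) : Prop :=
  ∃ u v, DerivesAround g [Symbol.nonterminal C] u C v ∧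
    a ⟨i, by omega⟩ ∈ u ∧ a ⟨i + 1, by omega⟩ ∈ v

theorem param_add_param_nonneg_of_pump (ha : Function.Injective a)
    (hg : g.language = boundedSumLang m a) (hC : IsUseful g C)
    (hpump : DerivesAround g [Symbol.nonterminal C] u C v) {j : ℕ} (hj : j ≤ m) :
    0 ≤ param a u j + param a v j := by
  obtain ⟨x, y, z, hctx, hy⟩ := hC
  by_contra! hneg
  let k := (param a x j + param a y j + param a z j).toNat + 1
  have hmem : x ++ (List.replicate k u).flatten ++ y ++ ((List.replicate k v).flatten ++ z) ∈
      boundedSumLang m a := hg ▸ (hctx.trans (hpump.iterate k)).trans_derivesWord hy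
  have hnonneg := param_nonneg ha hmem hj
  simp only [param_append, param_flatten_replicate] at hnonneg
  have hk : param a x j + param a y j + param a z j < k :=
    Int.lt_add_one_of_le (Int.self_le_toNat _)
  nlinarith

theorem mem_append_of_pump (ha : Function.Injective a) (hg : g.language = boundedSumLang m a)
    (hC : IsUseful g C) (hpump : DerivesAround g [Symbol.nonterminal C] u C v) {j : ℕ} (hj : j < m)
    (hne : param a u j + param a v j ≠ 0 ∨ param a u (j + 1) + param a v (j + 1) ≠ 0) :
    a ⟨j, hj⟩ ∈ u ++ v := by
  classical
  have hnonneg := param_add_param_nonneg_of_pump ha hg hC hpump hj.le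
  have hnonneg' := param_add_param_nonneg_of_pump ha hg hC hpump (j := j + 1) hj
  have hcount := param_add_param_succ (a := a) (u ++ v) hj
  simp only [param_append] at hcount
  exact List.count_pos_iff.1 (by omega)

theorem pumpsAt_of_pump (ha : Function.Injective a) (hg : g.language = boundedSumLang m a)
    (hC : IsUseful g C) (hpump : DerivesAround g [Symbol.nonterminal C] u C v) {i : Fin (m - 1)}
    (hne : param a u (i + 1) + param a v (i + 1) ≠ 0) : PumpsAt g a i C := by
  have hleft := mem_append_of_pump ha hg hC hpump (j := i) (by omega) (.inr hne)
  have hright := mem_append_of_pump ha hg hC hpump (j := i + 1) (by omega) (.inl hne)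
  obtain ⟨x, y, z, hctx, hy⟩ := hC
  have htwice : x ++ u ++ u ++ y ++ (v ++ (v ++ z)) ∈ boundedSumLang m a :=
    hg ▸ ((hctx.trans hpump).trans hpump).trans_derivesWord hy
  rw [List.mem_append] at hleft hright
  refine ⟨u, v, hpump, hleft.resolve_right fun hv => ?_, hright.resolve_left fun hu => ?_⟩
  · have hle : (⟨i + 1, by omega⟩ : Fin m) ≤ ⟨i, by omega⟩ :=
      le_of_append_mem ha (p := x ++ u ++ u ++ y ++ v) (q := v ++ z) (by simpa using htwice)
        (by simp only [List.mem_append]; tauto) (List.mem_append_left z hv)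
    exact Nat.not_succ_le_self _ hle
  · have hle : (⟨i + 1, by omega⟩ : Fin m) ≤ ⟨i, by omega⟩ :=
      le_of_append_mem ha (p := x ++ u) (q := u ++ y ++ (v ++ (v ++ z))) (by simpa using htwice)
        (List.mem_append_right x hu) (by simp only [List.mem_append]; tauto)
    exact Nat.not_succ_le_self _ hle

theorem eq_of_pumpsAt_of_derivesAround (ha : Function.Injective a)
    (hg : g.language = boundedSumLang m a) (hA : IsUseful g A) (hC : IsUseful g C)
    {y y' : List T} (hAC : DerivesAround g [Symbol.nonterminal A] y C y') {i j : Fin (m - 1)}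
    (hAi : PumpsAt g a i A) (hCj : PumpsAt g a j C) : i = j := by
  obtain ⟨x, -, z, hctx, -⟩ := hA
  obtain ⟨-, c, -, -, hc⟩ := hC
  obtain ⟨u, v, hpumpA, hu, hv⟩ := hAi
  obtain ⟨u', v', hpumpC, hu', hv'⟩ := hCj
  have hnested : x ++ u ++ y ++ u' ++ c ++ (v' ++ (y' ++ (v ++ z))) ∈ boundedSumLang m a :=
    hg ▸ (((hctx.trans hpumpA).trans hAC).trans hpumpC).trans_derivesWord hc
  have hij : (⟨i, by omega⟩ : Fin m) ≤ ⟨j, by omega⟩ :=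
    le_of_append_mem ha (p := x ++ u) (q := y ++ u' ++ c ++ (v' ++ (y' ++ (v ++ z))))
      (by simpa using hnested) (List.mem_append_right x hu) (by simp [hu'])
  have hji : (⟨j + 1, by omega⟩ : Fin m) ≤ ⟨i + 1, by omega⟩ :=
    le_of_append_mem ha (p := x ++ u ++ y ++ u' ++ c ++ v') (q := y' ++ (v ++ z))
      (by simpa using hnested) (List.mem_append_right _ hv') (by simp [hv])
  exact Fin.ext (le_antisymm hij (Nat.le_of_succ_le_succ hji))

theorem exists_bound_forall_exists_pumpsAt (ha : Function.Injective a)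
    (hg : g.language = boundedSumLang m a) :
    ∃ B : ℕ, ∀ F : ParseForest g [Symbol.nonterminal g.initial], ∀ i : Fin (m - 1),
      B < param a F.yield (i + 1) → ∃ C ∈ F.labels, PumpsAt g a i C := by
  obtain ⟨B, hB⟩ := ParseForest.exists_forall_length_yield_le g [Symbol.nonterminal g.initial]
  refine ⟨B, fun F i hlarge => ?_⟩
  by_contra! hnone
  have hpump : ∀ C ∈ F.labels, ∀ u v, DerivesAround g [Symbol.nonterminal C] u C v →
      param a u (i + 1) + param a v (i + 1) = 0 := fun C hC u v huv => by
    by_contra hne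
    exact hnone C hC (pumpsAt_of_pump ha hg (F.isUseful_of_mem_labels hC) huv hne)
  obtain ⟨F', hred, hparam⟩ := F.exists_isReduced_map_yield_eq (φ := (param a · (i + 1)))
    (fun u v => param_append u v _) hpump
  have hmem : F'.yield ∈ boundedSumLang m a := hg ▸ F'.derivesWord_yield
  have hle : param a F'.yield (i + 1) ≤ F'.yield.length :=
    param_succ_le_length ha hmem (by omega)
  have hlen := hB F' hred
  exact (hlarge.trans_le (hparam.ge.trans hle)).not_ge (mod_cast hlen)

end Grammar

end boundedSumLang

theorem stmt_8 {T : Type} {m : ℕ} (hm : 2 ≤ m) (a : Fin m → T) (ha : Function.Injective a)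
    (g : ContextFreeGrammar T) (hg : g.language = boundedSumLang m a) :
    ∃ α : List (Symbol T g.NT),
      g.Derives [Symbol.nonterminal g.initial] α ∧
      m - 1 ≤ α.countP Symbol.isNT := by
  obtain ⟨B, hB⟩ := boundedSumLang.exists_bound_forall_exists_pumpsAt ha hg
  obtain ⟨w, hw, hparam⟩ :=
    boundedSumLang.exists_mem_forall_param_eq ha (Nat.succ_le_succ (Nat.zero_le B))
  obtain ⟨F, rfl⟩ := ParseForest.exists_yield_eq (hg ▸ hw : w ∈ g.language)
  obtain ⟨β, hβ, hcard⟩ := F.exists_derives_card_le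
    (fun A hA C hC _ _ hAC _ _ => boundedSumLang.eq_of_pumpsAt_of_derivesAround ha hg
      (F.isUseful_of_mem_labels hA) (F.isUseful_of_mem_labels hC) hAC)
    Finset.univ (fun i _ => hB F i (by rw [hparam]; push_cast; omega))
  exact ⟨β, hβ, by simpa using hcard⟩
end

section
/- Fix an integer m ≥ 1, nonempty words w_1, …, w_m over an alphabet Σ, pairwise distinct symbols a_1, …, a_m, and let φ : {a_1, …, a_m}^* → Σ^* be the monoid homomorphism determined by φ(a_i) = w_i for i = 1, …, m. Then there exists a constant C (depending only on w_1, …, w_m) such that for every context-free grammar G in Chomsky normal form over Σ with L(G) ⊆ w_1^* w_2^* ⋯ w_m^*, there exists a context-free grammar Ĝ over the alphabet {a_1, …, a_m} with L(Ĝ) = φ^{-1}(L(G)) — in particular, for all integers k_1, …, k_m ≥ 0, a_1^{k_1} ⋯ a_m^{k_m} ∈ L(Ĝ) if and only if w_1^{k_1} ⋯ w_m^{k_m} ∈ L(G) — and with Symb(Ĝ) ≤ C · Symb(G). -/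
/-- A context-free grammar is in Chomsky normal form if every rule has the form
`A → B C` (two nonterminals) or `A → a` (a single terminal). -/
def ContextFreeGrammar.IsCNF {T : Type} (g : ContextFreeGrammar T) : Prop :=
  ∀ r ∈ g.rules,
    (∃ B C : g.NT, r.output = [Symbol.nonterminal B, Symbol.nonterminal C]) ∨
    (∃ t : T, r.output = [Symbol.terminal t])

/-- The number of symbols of a context-free grammar:
`Symb(G) = Σ_{(A→α) ∈ P} (2 + |α|)`. -/
def ContextFreeGrammar.symb {T : Type} (g : ContextFreeGrammar T) : ℕ :=
  ∑ r ∈ g.rules, (2 + r.output.length)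

/-- The word-bounded language `w_1^* w_2^* ⋯ w_m^*`. -/
def wordBounded {T : Type} {m : ℕ} (w : Fin m → List T) : Language T :=
  { z | ∃ k : Fin m → ℕ,
      z = (List.ofFn fun i : Fin m => (List.replicate (k i) (w i)).flatten).flatten }

/-- The monoid homomorphism `φ : {a_1, …, a_m}^* → Σ^*` determined by `φ(a_i) = w_i`,
where the letters `a_1, …, a_m` are the (pairwise distinct) elements of `Fin m`. -/
def phiHom {T : Type} {m : ℕ} (w : Fin m → List T) (x : List (Fin m)) : List T :=
  x.flatMap w

/-!
View `φ⁻¹` as the finite-state transduction whose state is the part of the current word `w i` still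
to be read. For a transducer with state set `Q`, the words output on the language of a grammar `g`
are generated by triples `(s, p, q)`, where `s` is a suffix of a right-hand side of `g` and
`p, q : Q`. Passing from a suffix to the next one costs one nonterminal and one guessed intermediate
state, so each rule `A → α` yields `O(1 + |α|)` rules of bounded length. Both inclusions of the
language equality are instances of fixed-point induction over the language equations of a grammar.
-/

section LanguageEquations

variable {T N : Type*}

/-- The value of a symbol when each nonterminal is interpreted as a language. -/
def symbolLanguage (L : N → Language T) : Symbol T N → Language T
  | .terminal t => {[t]}
  | .nonterminal A => L A

/-- The value of a sentential form when each nonterminal is interpreted as a language. -/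
def formLanguage (L : N → Language T) (s : List (Symbol T N)) : Language T :=
  (s.map (symbolLanguage L)).prod

/-- The terminal words derivable from a sentential form. -/
def derivedLanguage (g : ContextFreeGrammar T) (s : List (Symbol T g.NT)) : Language T :=
  {u | g.Derives s (u.map .terminal)}

/-- An interpretation of the nonterminals satisfying the language equations of a grammar as
inequalities. -/
def IsPrefixedPoint (g : ContextFreeGrammar T) (L : g.NT → Language T) : Prop :=
  ∀ r ∈ g.rules, formLanguage L r.output ≤ L r.input

@[simp]
theorem formLanguage_nil (L : N → Language T) : formLanguage L [] = 1 := rfl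

@[simp]
theorem formLanguage_cons (L : N → Language T) (X : Symbol T N) (s : List (Symbol T N)) :
    formLanguage L (X :: s) = symbolLanguage L X * formLanguage L s := by
  simp [formLanguage]

@[simp]
theorem formLanguage_append (L : N → Language T) (s s' : List (Symbol T N)) :
    formLanguage L (s ++ s') = formLanguage L s * formLanguage L s' := by
  simp [formLanguage]

theorem formLanguage_map_terminal (L : N → Language T) (u : List T) :
    formLanguage L (u.map .terminal) = {u} := by
  induction u with
  | nil => rfl
  | cons t u ih =>
    rw [List.map_cons, formLanguage_cons, ih]
    exact Set.image2_singleton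

variable {g : ContextFreeGrammar T}

theorem IsPrefixedPoint.formLanguage_le_of_derives {L : g.NT → Language T}
    (hL : IsPrefixedPoint g L) {s s' : List (Symbol T g.NT)} (h : g.Derives s s') :
    formLanguage L s' ≤ formLanguage L s := by
  induction h with
  | refl => rfl
  | tail _ hstep ih =>
    obtain ⟨r, hr, hrewrites⟩ := hstep
    obtain ⟨a, b, rfl, rfl⟩ := hrewrites.exists_parts
    refine le_trans ?_ ih
    simp only [formLanguage_append, formLanguage_cons, formLanguage_nil, mul_one, symbolLanguage]
    gcongr
    exact hL r hr

theorem IsPrefixedPoint.language_le {L : g.NT → Language T} (hL : IsPrefixedPoint g L) :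
    g.language ≤ L g.initial := by
  intro u hu
  have hle := hL.formLanguage_le_of_derives hu
  rw [formLanguage_map_terminal, formLanguage_cons, formLanguage_nil, mul_one] at hle
  exact hle rfl

theorem derivedLanguage_output_le {r : ContextFreeRule T g.NT} (hr : r ∈ g.rules) :
    derivedLanguage g r.output ≤ derivedLanguage g [.nonterminal r.input] :=
  fun _ hu => ContextFreeGrammar.Produces.trans_derives ⟨r, hr, .input_output⟩ hu

theorem derivedLanguage_mul_le (s s' : List (Symbol T g.NT)) :
    derivedLanguage g s * derivedLanguage g s' ≤ derivedLanguage g (s ++ s') := by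
  rintro _ ⟨u, hu, v, hv, rfl⟩
  change g.Derives (s ++ s') ((u ++ v).map .terminal)
  rw [List.map_append]
  exact (hu.append_right s').trans (hv.append_left _)

theorem append_mem_derivedLanguage {s s' : List (Symbol T g.NT)} {u v : List T}
    (hu : u ∈ derivedLanguage g s) (hv : v ∈ derivedLanguage g s') :
    u ++ v ∈ derivedLanguage g (s ++ s') :=
  derivedLanguage_mul_le s s' (Language.append_mem_mul hu hv)

theorem mem_derivedLanguage_map_terminal (u : List T) :
    u ∈ derivedLanguage g (u.map .terminal) :=
  .refl _

end LanguageEquations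

/-- A transition of a finite-state transducer. It reads at most one letter and writes a word. -/
structure Transition (Q T S : Type*) where
  source : Q
  input : Option T
  output : List S
  target : Q

/-- A nondeterministic finite-state transducer from words over `T` to words over `S`. -/
structure Transducer (Q T S : Type*) where
  start : Q
  accept : Q
  transitions : Finset (Transition Q T S)

namespace Transducer

section Run

variable {Q T S : Type*} (M : Transducer Q T S)

/-- `M.Run p u x q`: the transducer can move from `p` to `q` while reading `u` and writing `x`. -/
inductive Run : Q → List T → List S → Q → Prop
  | nil (p : Q) : Run p [] [] p
  | cons {e : Transition Q T S} (he : e ∈ M.transitions) {u : List T} {x : List S} {q : Q}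
      (hrun : Run e.target u x q) : Run e.source (e.input.toList ++ u) (e.output ++ x) q

/-- The words written on runs from `p` to `q` that read a word of `L`. -/
def transduction (p q : Q) (L : Language T) : Language S :=
  {x | ∃ u ∈ L, M.Run p u x q}

variable {M}

theorem Run.append {p k q : Q} {u v : List T} {x y : List S} (h : M.Run p u x k)
    (h' : M.Run k v y q) : M.Run p (u ++ v) (x ++ y) q := by
  induction h with
  | nil => exact h'
  | cons he _ ih => simpa only [List.append_assoc] using Run.cons he (ih h')

theorem Run.single {e : Transition Q T S} (he : e ∈ M.transitions) :
    M.Run e.source e.input.toList e.output e.target := by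
  simpa using Run.cons he (.nil e.target)

theorem Run.exists_of_append {p q : Q} {u v : List T} {x : List S} (h : M.Run p (u ++ v) x q) :
    ∃ k y z, M.Run p u y k ∧ M.Run k v z q ∧ x = y ++ z := by
  generalize huv : u ++ v = z at h
  induction h generalizing u with
  | nil p =>
    obtain ⟨rfl, rfl⟩ := List.append_eq_nil_iff.1 huv
    exact ⟨p, [], [], .nil p, .nil p, rfl⟩
  | @cons e he u' x q hrun ih =>
    cases u with
    | nil =>
      obtain rfl : v = e.input.toList ++ u' := huv
      exact ⟨e.source, [], e.output ++ x, .nil _, .cons he hrun, rfl⟩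
    | cons t u =>
      obtain ⟨u₀, hu₀, hu'⟩ : ∃ u₀, t :: u = e.input.toList ++ u₀ ∧ u₀ ++ v = u' := by
        cases hin : e.input <;> simp_all
      obtain ⟨k, y, z, hy, hz, rfl⟩ := ih hu'
      exact ⟨k, e.output ++ y, z, hu₀ ▸ .cons he hy, hz, (List.append_assoc _ _ _).symm⟩

theorem Run.exists_of_singleton {p q : Q} {t : T} {x : List S} (h : M.Run p [t] x q) :
    ∃ e ∈ M.transitions, e.input = some t ∧ ∃ y z,
      M.Run p [] y e.source ∧ M.Run e.target [] z q ∧ x = y ++ e.output ++ z := by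
  generalize hu : [t] = u at h
  induction h with
  | nil => cases hu
  | @cons e he u x q hrun ih =>
    cases hin : e.input with
    | none =>
      obtain ⟨e', he', hin', y, z, hy, hz, rfl⟩ := ih (by simpa [hin] using hu)
      refine ⟨e', he', hin', e.output ++ y, z, ?_, hz, by simp⟩
      simpa [hin] using Run.cons he hy
    | some t' =>
      obtain ⟨rfl, rfl⟩ : t = t' ∧ [] = u := by simpa [hin] using hu
      exact ⟨e, he, hin, [], x, .nil _, hrun, rfl⟩

theorem transduction_mono (p q : Q) : Monotone (M.transduction p q) :=
  fun _ _ hle _ ⟨u, hu, hrun⟩ => ⟨u, hle hu, hrun⟩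

theorem transduction_mul_le (p k q : Q) (L L' : Language T) :
    M.transduction p k L * M.transduction k q L' ≤ M.transduction p q (L * L') := by
  rintro _ ⟨x, ⟨u, hu, hx⟩, y, ⟨v, hv, hy⟩, rfl⟩
  exact ⟨u ++ v, Language.append_mem_mul hu hv, hx.append hy⟩

theorem singleton_le_transduction {e : Transition Q T S} (he : e ∈ M.transitions)
    {L : Language T} (hL : e.input.toList ∈ L) :
    ({e.output} : Language S) ≤ M.transduction e.source e.target L := by
  rintro _ rfl
  exact ⟨_, hL, .single he⟩

theorem transduction_derivedLanguage_mul_le {g : ContextFreeGrammar T} (p k q : Q)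
    (s s' : List (Symbol T g.NT)) :
    M.transduction p k (derivedLanguage g s) * M.transduction k q (derivedLanguage g s') ≤
      M.transduction p q (derivedLanguage g (s ++ s')) :=
  (transduction_mul_le p k q _ _).trans (transduction_mono p q (derivedLanguage_mul_le s s'))

end Run

section ImageGrammar

variable {Q T N : Type} {S : Type*} (M : Transducer Q T S)

/-- A nonterminal `(s, p, q)` of the image grammar stands for the words written on runs from `p` to
`q` that read a word derived from `s`. -/
abbrev ImageNT (Q T N : Type) : Type := List (Symbol T N) × Q × Q

/-- `(A, p, q) → (α, p, q)` for a rule `A → α`. -/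
def expandRule (r : ContextFreeRule T N) (p q : Q) : ContextFreeRule S (ImageNT Q T N) :=
  ⟨([.nonterminal r.input], p, q), [.nonterminal (r.output, p, q)]⟩

/-- `(Xs, p, q) → (X, p, k) (s, k, q)` for a symbol `X`. The useless case of the empty form is
included to avoid a case distinction. -/
def splitRule (s : List (Symbol T N)) (p k q : Q) : ContextFreeRule S (ImageNT Q T N) :=
  ⟨(s, p, q), [.nonterminal (s.take 1, p, k), .nonterminal (s.drop 1, k, q)]⟩

/-- `(ε, p, p) → ε`. -/
def nilRule (p : Q) : ContextFreeRule S (ImageNT Q T N) :=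
  ⟨([], p, p), []⟩

/-- Use of a transition `e` in a run from `p` to `q`: the parts of the run before and after `e` read
nothing. -/
def stepRule (e : Transition Q T S) (p q : Q) : ContextFreeRule S (ImageNT Q T N) :=
  ⟨(e.input.toList.map .terminal, p, q),
    [.nonterminal ([], p, e.source)] ++ e.output.map .terminal ++
      [.nonterminal ([], e.target, q)]⟩

variable [Fintype Q]

open Classical in
/-- The rules of the image grammar contributed by a rule `r`. The last two groups do not depend on
`r`, but attaching them to it makes the size estimate hold for a grammar without rules as well. -/
noncomputable def imageRules (r : ContextFreeRule T N) :
    Finset (ContextFreeRule S (ImageNT Q T N)) :=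
  Finset.univ.image (fun (p, q) => expandRule r p q) ∪
  (r.output.tails.toFinset ×ˢ Finset.univ).image (fun (s, p, k, q) => splitRule s p k q) ∪
  Finset.univ.image nilRule ∪
  (M.transitions ×ˢ Finset.univ).image (fun (e, p, q) => stepRule e p q)

open Classical in
/-- A grammar for the image of the language of `g` under the transducer `M`. -/
noncomputable def imageGrammar (g : ContextFreeGrammar T) : ContextFreeGrammar S where
  NT := ImageNT Q T g.NT
  initial := ([.nonterminal g.initial], M.start, M.accept)
  rules := g.rules.biUnion M.imageRules

variable {M}

theorem forall_mem_imageRules {r : ContextFreeRule T N}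
    {P : ContextFreeRule S (ImageNT Q T N) → Prop} :
    (∀ r' ∈ M.imageRules r, P r') ↔
      (∀ p q, P (expandRule r p q)) ∧
      (∀ s, s <:+ r.output → ∀ p k q, P (splitRule s p k q)) ∧
      (∀ p, P (nilRule p)) ∧
      ∀ e ∈ M.transitions, ∀ p q, P (stepRule e p q) := by
  classical
  simp only [imageRules, Finset.forall_mem_union, Finset.forall_mem_image, Finset.mem_product,
    Finset.mem_univ, Prod.forall, List.mem_toFinset, List.mem_tails, and_true, true_imp_iff,
    and_assoc]
  grind

variable {g : ContextFreeGrammar T}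

theorem forall_mem_rules_imageGrammar {P : ContextFreeRule S (ImageNT Q T g.NT) → Prop} :
    (∀ r' ∈ (M.imageGrammar g).rules, P r') ↔ ∀ r ∈ g.rules, ∀ r' ∈ M.imageRules r, P r' := by
  classical
  change (∀ r' ∈ g.rules.biUnion M.imageRules, P r') ↔ _
  simp only [Finset.mem_biUnion]
  grind

/-- The language that a nonterminal of the image grammar of `g` is meant to generate. -/
def itemLanguage (M : Transducer Q T S) (g : ContextFreeGrammar T) :
    ImageNT Q T g.NT → Language S :=
  fun (s, p, q) => M.transduction p q (derivedLanguage g s)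

theorem isPrefixedPoint_itemLanguage : IsPrefixedPoint (M.imageGrammar g) (M.itemLanguage g) := by
  suffices h : ∀ r ∈ g.rules, ∀ r' ∈ M.imageRules r,
      formLanguage (M.itemLanguage g) r'.output ≤ M.itemLanguage g r'.input from
    forall_mem_rules_imageGrammar.2 h
  refine fun r hr => forall_mem_imageRules.2
    ⟨fun p q => ?_, fun s _ p k q => ?_, fun p => ?_, fun e he p q => ?_⟩
  · simpa [expandRule, symbolLanguage, itemLanguage] using
      transduction_mono p q (derivedLanguage_output_le hr)
  · simpa [splitRule, symbolLanguage, itemLanguage, -List.drop_one] using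
      transduction_derivedLanguage_mul_le (M := M) p k q (s.take 1) (s.drop 1)
  · rintro _ rfl
    exact ⟨[], mem_derivedLanguage_map_terminal [], .nil p⟩
  · simp only [stepRule, formLanguage_append, formLanguage_cons, formLanguage_nil, mul_one,
      symbolLanguage, formLanguage_map_terminal, itemLanguage]
    grw [singleton_le_transduction he (mem_derivedLanguage_map_terminal (g := g) _),
      transduction_derivedLanguage_mul_le, transduction_derivedLanguage_mul_le]
    simp

theorem mem_rules_imageGrammar {r : ContextFreeRule T g.NT} (hr : r ∈ g.rules) :
    (∀ p q, expandRule r p q ∈ (M.imageGrammar g).rules) ∧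
      (∀ s, s <:+ r.output → ∀ p k q, splitRule s p k q ∈ (M.imageGrammar g).rules) ∧
      (∀ p, nilRule p ∈ (M.imageGrammar g).rules) ∧
      ∀ e ∈ M.transitions, ∀ p q, stepRule e p q ∈ (M.imageGrammar g).rules :=
  forall_mem_imageRules.1 (forall_mem_rules_imageGrammar.1 (fun _ hr' => hr') r hr)

/-- The words `u` for which the image grammar generates from `(s, p, q)` the output of every run
from `p` to `q` on `u`. -/
def simulatedLanguage (M : Transducer Q T S) (g : ContextFreeGrammar T)
    (s : List (Symbol T g.NT)) : Language T :=
  {u | ∀ p q x, M.Run p u x q → x ∈ derivedLanguage (M.imageGrammar g) [.nonterminal (s, p, q)]}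

variable {r : ContextFreeRule T g.NT}

theorem mem_derivedLanguage_of_step (hr : r ∈ g.rules) {e : Transition Q T S}
    (he : e ∈ M.transitions) {p q : Q} {y z : List S}
    (hy : y ∈ derivedLanguage (M.imageGrammar g) [.nonterminal ([], p, e.source)])
    (hz : z ∈ derivedLanguage (M.imageGrammar g) [.nonterminal ([], e.target, q)]) :
    y ++ e.output ++ z ∈ derivedLanguage (M.imageGrammar g)
      [.nonterminal (e.input.toList.map .terminal, p, q)] :=
  derivedLanguage_output_le ((mem_rules_imageGrammar hr).2.2.2 e he p q)
    (append_mem_derivedLanguage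
      (append_mem_derivedLanguage hy (mem_derivedLanguage_map_terminal _)) hz)

theorem nil_mem_simulatedLanguage (hr : r ∈ g.rules) : [] ∈ simulatedLanguage M g [] := by
  intro p q x hrun
  have nil_mem (p : Q) : [] ∈ derivedLanguage (M.imageGrammar g) [.nonterminal ([], p, p)] :=
    derivedLanguage_output_le ((mem_rules_imageGrammar hr).2.2.1 p)
      (mem_derivedLanguage_map_terminal [])
  generalize hu : [] = u at hrun
  induction hrun with
  | nil p => exact nil_mem p
  | @cons e he u x q _ ih =>
    obtain ⟨hin, rfl⟩ := List.append_eq_nil_iff.1 hu.symm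
    simpa [hin] using mem_derivedLanguage_of_step hr he (nil_mem e.source) (ih rfl)

theorem singleton_mem_simulatedLanguage (hr : r ∈ g.rules) (t : T) :
    [t] ∈ simulatedLanguage M g [.terminal t] := by
  intro p q x hrun
  obtain ⟨e, he, hin, y, z, hy, hz, rfl⟩ := hrun.exists_of_singleton
  simpa [hin] using mem_derivedLanguage_of_step hr he
    (nil_mem_simulatedLanguage hr _ _ _ hy) (nil_mem_simulatedLanguage hr _ _ _ hz)

theorem simulatedLanguage_mul_le (hr : r ∈ g.rules) {X : Symbol T g.NT}
    {s : List (Symbol T g.NT)} (hs : X :: s <:+ r.output) :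
    simulatedLanguage M g [X] * simulatedLanguage M g s ≤ simulatedLanguage M g (X :: s) := by
  rintro _ ⟨u, hu, v, hv, rfl⟩ p q x hrun
  obtain ⟨k, y, z, hy, hz, rfl⟩ := hrun.exists_of_append
  exact derivedLanguage_output_le ((mem_rules_imageGrammar hr).2.1 _ hs p k q)
    (append_mem_derivedLanguage (hu _ _ _ hy) (hv _ _ _ hz))

theorem formLanguage_le_simulatedLanguage (hr : r ∈ g.rules) {s : List (Symbol T g.NT)}
    (hs : s <:+ r.output) :
    formLanguage (fun A => simulatedLanguage M g [.nonterminal A]) s ≤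
      simulatedLanguage M g s := by
  induction s with
  | nil =>
    rintro _ rfl
    exact nil_mem_simulatedLanguage hr
  | cons X s ih =>
    have hX : symbolLanguage (fun A => simulatedLanguage M g [.nonterminal A]) X ≤
        simulatedLanguage M g [X] := by
      cases X with
      | terminal t =>
        rintro _ rfl
        exact singleton_mem_simulatedLanguage hr t
      | nonterminal A => rfl
    rw [formLanguage_cons]
    exact (mul_le_mul' hX (ih ((List.suffix_cons X s).trans hs))).trans
      (simulatedLanguage_mul_le hr hs)

theorem isPrefixedPoint_simulatedLanguage :
    IsPrefixedPoint g fun A => simulatedLanguage M g [.nonterminal A] :=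
  fun _ hr _ hu p q x hrun =>
    derivedLanguage_output_le ((mem_rules_imageGrammar hr).1 p q)
      (formLanguage_le_simulatedLanguage hr List.suffix_rfl hu p q x hrun)

variable (M g)

theorem language_imageGrammar :
    (M.imageGrammar g).language = M.transduction M.start M.accept g.language := by
  refine le_antisymm isPrefixedPoint_itemLanguage.language_le ?_
  rintro x ⟨u, hu, hrun⟩
  exact isPrefixedPoint_simulatedLanguage.language_le hu _ _ _ hrun

variable {g}

/-- The size of the longest rule of an image grammar, for the measure `ContextFreeGrammar.symb`. -/
def maxRuleSize : ℕ := 4 + M.transitions.sup fun e => e.output.length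

theorem rule_size_le_maxRuleSize {r : ContextFreeRule T N} :
    ∀ r' ∈ M.imageRules r, 2 + r'.output.length ≤ M.maxRuleSize := by
  refine forall_mem_imageRules.2 ⟨fun p q => ?_, fun s _ p k q => ?_, fun p => ?_,
    fun e he p q => ?_⟩
  · simp only [expandRule, maxRuleSize, List.length_cons, List.length_nil]
    omega
  · simp only [splitRule, maxRuleSize, List.length_cons, List.length_nil]
    omega
  · simp only [nilRule, maxRuleSize, List.length_nil]
    omega
  · have hout := Finset.le_sup (f := fun e : Transition Q T S => e.output.length) he
    simp only [stepRule, maxRuleSize, List.length_append, List.length_cons, List.length_nil,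
      List.length_map]
    omega

/-- A bound for the number of rules of the image grammar per unit of the size of the original
grammar. -/
def ruleFactor : ℕ :=
  Fintype.card Q ^ 2 + Fintype.card Q ^ 3 + Fintype.card Q +
    M.transitions.card * Fintype.card Q ^ 2

theorem card_imageRules_le (r : ContextFreeRule T N) :
    (M.imageRules r).card ≤ M.ruleFactor * (2 + r.output.length) := by
  classical
  have htails : r.output.tails.toFinset.card ≤ r.output.length + 1 :=
    (List.toFinset_card_le _).trans_eq (List.length_tails _)
  have hunion : (M.imageRules r).card ≤
      Fintype.card Q ^ 2 + Fintype.card Q ^ 3 * (r.output.length + 1) + Fintype.card Q +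
        M.transitions.card * Fintype.card Q ^ 2 := by
    unfold imageRules
    grw [Finset.card_union_le, Finset.card_union_le, Finset.card_union_le,
      Finset.card_image_le, Finset.card_image_le, Finset.card_image_le, Finset.card_image_le,
      Finset.card_product, Finset.card_product, htails]
    simp only [Finset.card_univ, Fintype.card_prod]
    exact le_of_eq (by ring)
  refine hunion.trans ?_
  rw [ruleFactor, add_mul, add_mul, add_mul]
  gcongr ?_ + _ * ?_ + ?_ + ?_
  · exact Nat.le_mul_of_pos_right _ (by omega)
  · omega
  · exact Nat.le_mul_of_pos_right _ (by omega)
  · exact Nat.le_mul_of_pos_right _ (by omega)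

theorem symb_imageGrammar_le {S : Type} (M : Transducer Q T S) (g : ContextFreeGrammar T) :
    (M.imageGrammar g).symb ≤ M.maxRuleSize * M.ruleFactor * g.symb := by
  classical
  have hcard : (M.imageGrammar g).rules.card ≤ M.ruleFactor * g.symb :=
    calc
      _ ≤ ∑ r ∈ g.rules, (M.imageRules r).card := Finset.card_biUnion_le
      _ ≤ ∑ r ∈ g.rules, M.ruleFactor * (2 + r.output.length) :=
        Finset.sum_le_sum fun r _ => M.card_imageRules_le r
      _ = M.ruleFactor * g.symb := (Finset.mul_sum ..).symm
  calc
    (M.imageGrammar g).symb ≤ (M.imageGrammar g).rules.card * M.maxRuleSize :=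
      Finset.sum_le_card_nsmul _ _ _ <|
        forall_mem_rules_imageGrammar.2 fun _ _ => M.rule_size_le_maxRuleSize
    _ ≤ M.ruleFactor * g.symb * M.maxRuleSize := by gcongr
    _ = M.maxRuleSize * M.ruleFactor * g.symb := by ring

end ImageGrammar

end Transducer

section InverseHomomorphism

variable {S T : Type*} (w : S → List T)

/-- The states of the transducer for the inverse of the homomorphism `w`: what remains to be read of
the image of the current letter. -/
abbrev Buffer := {b : List T // b = [] ∨ ∃ i, b <:+ w i}

instance [Finite S] : Finite (Buffer w) := by
  have hfin : ({[]} ∪ ⋃ i, {b | b ∈ (w i).tails}).Finite :=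
    (Set.finite_singleton _).union (Set.finite_iUnion fun i => List.finite_toSet _)
  refine (hfin.subset ?_).to_subtype
  rintro b (rfl | hb)
  · exact .inl rfl
  · exact .inr (by simpa using hb)

variable {w}

/-- The buffer between two letters. -/
def Buffer.empty : Buffer w := ⟨[], .inl rfl⟩

/-- The buffer after the letter `i` has been written. -/
def Buffer.load (i : S) : Buffer w := ⟨w i, .inr ⟨i, List.suffix_rfl⟩⟩

/-- The buffer after its first letter, if any, has been read. -/
def Buffer.read (b : Buffer w) : Buffer w :=
  ⟨b.1.tail, b.2.imp (fun h => by simp [h]) fun ⟨i, hi⟩ => ⟨i, (List.tail_suffix _).trans hi⟩⟩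

/-- Writing a letter `i`, which is possible once the image of the previous letter has been read. -/
def loadTransition (i : S) : Transition (Buffer w) T S :=
  ⟨.empty, none, [i], .load i⟩

/-- Reading the first letter of the buffer. On the empty buffer this is a harmless idle move. -/
def readTransition (b : Buffer w) : Transition (Buffer w) T S :=
  ⟨b, b.1.head?, [], b.read⟩

variable (w) [Fintype S] [Fintype (Buffer w)]

open Classical in
/-- The transducer that writes a word while reading its image under the homomorphism `w`. -/
noncomputable def inverseTransducer : Transducer (Buffer w) T S where
  start := .empty
  accept := .empty
  transitions := Finset.univ.image loadTransition ∪ Finset.univ.image readTransition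

variable {w}

theorem forall_mem_transitions_inverseTransducer {P : Transition (Buffer w) T S → Prop} :
    (∀ e ∈ (inverseTransducer w).transitions, P e) ↔
      (∀ i, P (loadTransition i)) ∧ ∀ b, P (readTransition b) := by
  classical
  simp only [inverseTransducer, Finset.forall_mem_union, Finset.forall_mem_image, Finset.mem_univ,
    true_imp_iff]

theorem loadTransition_mem_transitions (i : S) :
    loadTransition i ∈ (inverseTransducer w).transitions :=
  (forall_mem_transitions_inverseTransducer.1 fun _ he => he).1 i

theorem readTransition_mem_transitions (b : Buffer w) :
    readTransition b ∈ (inverseTransducer w).transitions :=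
  (forall_mem_transitions_inverseTransducer.1 fun _ he => he).2 b

theorem append_flatMap_eq_of_run {p q : Buffer w} {u : List T} {x : List S}
    (h : (inverseTransducer w).Run p u x q) : p.1 ++ x.flatMap w = u ++ q.1 := by
  have step : ∀ e ∈ (inverseTransducer w).transitions,
      e.source.1 ++ e.output.flatMap w = e.input.toList ++ e.target.1 := by
    refine forall_mem_transitions_inverseTransducer.2 ⟨fun i => ?_, fun b => ?_⟩
    · simp [loadTransition, Buffer.empty, Buffer.load]
    · obtain ⟨_ | ⟨t, b⟩, hb⟩ := b <;> simp [readTransition, Buffer.read]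
  induction h with
  | nil => simp
  | cons he _ ih =>
    rw [List.flatMap_append, ← List.append_assoc, step _ he, List.append_assoc, ih,
      List.append_assoc]

theorem run_buffer (b : Buffer w) : (inverseTransducer w).Run b b.1 [] .empty := by
  obtain ⟨b, hb⟩ := b
  induction b with
  | nil => exact .nil _
  | cons t b ih => exact .cons (readTransition_mem_transitions ⟨t :: b, hb⟩) (ih _)

theorem run_flatMap (x : List S) :
    (inverseTransducer w).Run .empty (x.flatMap w) x .empty := by
  induction x with
  | nil => exact .nil _
  | cons i x ih => exact .cons (loadTransition_mem_transitions i) ((run_buffer (.load i)).append ih)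

theorem transduction_inverseTransducer (L : Language T) :
    (inverseTransducer w).transduction .empty .empty L = {x | x.flatMap w ∈ L} := by
  ext x
  constructor
  · rintro ⟨u, hu, hrun⟩
    obtain rfl : x.flatMap w = u := by simpa [Buffer.empty] using append_flatMap_eq_of_run hrun
    exact hu
  · exact fun hx => ⟨_, hx, run_flatMap x⟩

end InverseHomomorphism

theorem phiHom_flatten_replicate {T : Type} {m : ℕ} (w : Fin m → List T) (k : Fin m → ℕ) :
    phiHom w (List.ofFn fun i => List.replicate (k i) i).flatten =
      (List.ofFn fun i => (List.replicate (k i) (w i)).flatten).flatten := by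
  simp [phiHom, List.flatMap_def, List.map_flatten, List.flatten_flatten, List.map_ofFn,
    Function.comp_def]

theorem stmt_10_general {S T : Type} [Finite S] (w : S → List T) :
    ∃ C : ℕ, ∀ g : ContextFreeGrammar T, ∃ gh : ContextFreeGrammar S,
      gh.language = {x | x.flatMap w ∈ g.language} ∧ gh.symb ≤ C * g.symb := by
  have := Fintype.ofFinite S
  have := Fintype.ofFinite (Buffer w)
  let M := inverseTransducer w
  exact ⟨M.maxRuleSize * M.ruleFactor, fun g => ⟨M.imageGrammar g,
    (M.language_imageGrammar g).trans (transduction_inverseTransducer _),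
    M.symb_imageGrammar_le g⟩⟩

theorem stmt_10 {T : Type} {m : ℕ} (hm : 1 ≤ m) (w : Fin m → List T)
    (hw : ∀ i : Fin m, w i ≠ []) :
    ∃ C : ℕ, ∀ g : ContextFreeGrammar T, g.IsCNF → g.language ≤ wordBounded w →
      ∃ gh : ContextFreeGrammar (Fin m),
        gh.language = { x | phiHom w x ∈ g.language } ∧
        (∀ k : Fin m → ℕ,
          ((List.ofFn fun i : Fin m => List.replicate (k i) i).flatten ∈ gh.language ↔
           (List.ofFn fun i : Fin m =>
              (List.replicate (k i) (w i)).flatten).flatten ∈ g.language)) ∧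
        gh.symb ≤ C * g.symb := by
  obtain ⟨C, hC⟩ := stmt_10_general w
  refine ⟨C, fun g _ _ => ?_⟩
  obtain ⟨gh, hlang, hsymb⟩ := hC g
  exact ⟨gh, hlang, fun k => by rw [hlang, ← phiHom_flatten_replicate]; rfl, hsymb⟩
end
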